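/- We have ∑_{n=1}^∞ 4^n / (binom(2n, n) · (2n−1)²) = 2G − π³/32 + 4 · Im(∑_{n=1}^∞ ((1+i)/2)^n / n³) − (π (log 2)²)/8, where G = ∑_{k=0}^∞ (−1)^k/(2k+1)² is Catalan's constant. -/

import Mathlib

open Real Complex

/-!
The `k`-th Taylor coefficient `c k` of `arcsin t / √(1 - t ^ 2)` is `4 ^ n / (binom(2n, n) 2n)` with
`n = k + 1`, and `2n / (2n - 1) ^ 2 = 1 / (2k + 1) + 1 / (2k + 1) ^ 2`. Hence the sum is
`P₁(1) + P₂(1)`, where `Pₛ(t) = ∑ c k t ^ (2k + 1) / (2k + 1) ^ s` arises from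
`arcsin t / √(1 - t ^ 2)` by integrating `s` times against `dt / t`.

Under `t = 2u / (1 + u ^ 2)` one has `dt / t = (1 - u ^ 2) / (u (1 + u ^ 2)) du` and
`P₀(t) = 2 arctan u (1 + u ^ 2) / (1 - u ^ 2)`, so `P₁(t) = 2 ∫ arctan u du / u = 2 Im Li₂(iu)`.
Integrating `P₁` by parts reduces `P₂` to `Im Li₃(iu)`, `log (1 + u ^ 2) Im Li₂(iu)` and
`∫ log (1 + u ^ 2) arctan u du / u`. The last integrand is minus the imaginary part of
`log (1 - z) ^ 2 dz / z` on the ray `z = iu`, and Landen's identity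
`Li₂(z) + Li₂(z / (z - 1)) = -log (1 - z) ^ 2 / 2` provides a primitive of it in terms of
`log (1 - z)`, `Li₂(z)`, `Li₃(z)` and `Li₃(z / (z - 1))`. At `z = i` the
argument `z / (z - 1)` is the conjugate of `(1 + i) / 2`.
-/

theorem eqOn_Icc_of_hasDerivAt_eq {E : Type*} [NormedAddCommGroup E] [NormedSpace ℝ E]
    [CompleteSpace E] {f g f' : ℝ → E} {a b : ℝ} (hf : ContinuousOn f (Set.Icc a b))
    (hg : ContinuousOn g (Set.Icc a b)) (hf' : ∀ x ∈ Set.Ioo a b, HasDerivAt f (f' x) x)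
    (hg' : ∀ x ∈ Set.Ioo a b, HasDerivAt g (f' x) x) (hfg : f a = g a) :
    Set.EqOn f g (Set.Icc a b) := by
  intro x hx
  have hsub : Set.Icc a x ⊆ Set.Icc a b := Set.Icc_subset_Icc_right hx.2
  have hderiv : ∀ y ∈ Set.Ioo a x, HasDerivAt (f - g) 0 y := fun y hy => by
    have hy' : y ∈ Set.Ioo a b := ⟨hy.1, hy.2.trans_le hx.2⟩
    simpa using (hf' y hy').sub (hg' y hy')
  have hint := intervalIntegral.integral_eq_sub_of_hasDerivAt_of_le hx.1
    ((hf.sub hg).mono hsub) hderiv intervalIntegrable_const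
  simpa [hfg, sub_eq_zero, eq_comm] using hint

section LacunaryPolylog

variable {𝕜 : Type*} [RCLike 𝕜] {a : ℕ → 𝕜} {e : ℕ → ℕ} {C : ℝ} {z : 𝕜}

theorem summable_mul_pow (ha : ∀ n, ‖a n‖ ≤ C) (he : e.Injective) (hz : ‖z‖ < 1) :
    Summable fun n => a n * z ^ e n := by
  have hgeom : Summable fun n => C * ‖z‖ ^ e n :=
    ((summable_geometric_of_lt_one (norm_nonneg z) hz).comp_injective he).mul_left C
  refine .of_norm_bounded hgeom fun n => ?_
  rw [norm_mul, norm_pow]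
  gcongr
  exact ha n

theorem summable_natCast_mul_pow_pred (hz : ‖z‖ < 1) :
    Summable fun n : ℕ => (n : 𝕜) * z ^ (n - 1) := by
  rw [← summable_nat_add_iff 1]
  have hsum := (hasSum_coe_mul_geometric_of_norm_lt_one hz).summable.add
    (summable_geometric_of_norm_lt_one hz)
  exact hsum.congr fun n => by push_cast [Nat.add_sub_cancel]; ring

theorem summable_mul_natCast_mul_pow_pred (ha : ∀ n, ‖a n‖ ≤ C) (he : e.Injective)
    (hz : ‖z‖ < 1) : Summable fun n => a n * (e n * z ^ (e n - 1)) := by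
  have hgeom : Summable fun n => C * (e n * ‖z‖ ^ (e n - 1)) :=
    ((summable_natCast_mul_pow_pred (𝕜 := ℝ) (by simpa using hz)).comp_injective he).mul_left C
  refine .of_norm_bounded hgeom fun n => ?_
  rw [norm_mul, norm_mul, norm_pow, RCLike.norm_natCast]
  gcongr
  exact ha n

theorem hasDerivAt_tsum_mul_pow (ha : ∀ n, ‖a n‖ ≤ C) (he : e.Injective) (hz : ‖z‖ < 1) :
    HasDerivAt (fun w => ∑' n, a n * w ^ e n) (∑' n, a n * (e n * z ^ (e n - 1))) z := by
  obtain ⟨r, hzr, hr⟩ := exists_between hz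
  have hr0 : 0 ≤ r := (norm_nonneg z).trans hzr.le
  have hmajorant : Summable fun n => C * (e n * r ^ (e n - 1)) :=
    ((summable_natCast_mul_pow_pred (𝕜 := ℝ) (by rwa [norm_of_nonneg hr0])).comp_injective
      he).mul_left C
  have hzmem : z ∈ Metric.ball (0 : 𝕜) r := by simpa using hzr
  refine hasDerivAt_tsum_of_isPreconnected hmajorant Metric.isOpen_ball
    (convex_ball (0 : 𝕜) r).isPreconnected (fun n y _ => (hasDerivAt_pow (e n) y).const_mul (a n))
    (fun n y hy => ?_) hzmem (summable_mul_pow ha he hz) hzmem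
  have hC : 0 ≤ C := (norm_nonneg _).trans (ha n)
  have hyr : ‖y‖ ≤ r := by simpa using (Metric.mem_ball.1 hy).le
  rw [norm_mul, norm_mul, norm_pow, RCLike.norm_natCast]
  gcongr
  exact ha n

/-- The series `∑ aₙ z ^ eₙ / eₙ ^ s`, which is the polylogarithm `Liₛ` for `aₙ = 1`,
`eₙ = n + 1`, and in general arises from `∑ aₙ z ^ eₙ` by integrating `s` times against `dz / z`. -/
noncomputable def lacunaryPolylog (a : ℕ → 𝕜) (e : ℕ → ℕ) (s : ℕ) (z : 𝕜) : 𝕜 :=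
  ∑' n, a n / (e n : 𝕜) ^ s * z ^ e n

theorem lacunaryPolylog_apply_zero (he0 : ∀ n, e n ≠ 0) (s : ℕ) :
    lacunaryPolylog a e s 0 = 0 := by
  simp [lacunaryPolylog, he0]

theorem norm_div_natCast_pow_le (x : 𝕜) {m : ℕ} (hm : m ≠ 0) (s : ℕ) :
    ‖x / (m : 𝕜) ^ s‖ ≤ ‖x‖ := by
  rw [norm_div, norm_pow, RCLike.norm_natCast]
  exact div_le_self (norm_nonneg x)
    (one_le_pow₀ (Nat.one_le_cast.2 (Nat.one_le_iff_ne_zero.2 hm)))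

theorem hasDerivAt_lacunaryPolylog (ha : ∀ n, ‖a n‖ ≤ C) (he : e.Injective)
    (he0 : ∀ n, e n ≠ 0) (s : ℕ) (hz0 : z ≠ 0) (hz : ‖z‖ < 1) :
    HasDerivAt (lacunaryPolylog a e (s + 1)) (lacunaryPolylog a e s z / z) z := by
  have hcoeff (n : ℕ) : ‖a n / (e n : 𝕜) ^ (s + 1)‖ ≤ C :=
    (norm_div_natCast_pow_le _ (he0 n) _).trans (ha n)
  refine (hasDerivAt_tsum_mul_pow hcoeff he hz).congr_deriv ?_
  rw [lacunaryPolylog, ← tsum_div_const]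
  refine tsum_congr fun n => ?_
  have hn : (e n : 𝕜) ≠ 0 := Nat.cast_ne_zero.2 (he0 n)
  obtain ⟨m, hm⟩ := Nat.exists_eq_succ_of_ne_zero (he0 n)
  rw [pow_succ (e n : 𝕜) s, show z ^ e n = z ^ (e n - 1) * z by rw [hm]; exact pow_succ z m]
  field_simp

theorem summable_lacunaryPolylog {s : ℕ} (ha : Summable fun n => ‖a n / (e n : 𝕜) ^ s‖)
    (hz : ‖z‖ ≤ 1) : Summable fun n => a n / (e n : 𝕜) ^ s * z ^ e n := by
  refine .of_norm_bounded ha fun n => ?_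
  rw [norm_mul, norm_pow]
  exact mul_le_of_le_one_right (norm_nonneg _) (pow_le_one₀ (norm_nonneg _) hz)

theorem continuousOn_lacunaryPolylog {s : ℕ} (ha : Summable fun n => ‖a n / (e n : 𝕜) ^ s‖) :
    ContinuousOn (lacunaryPolylog a e s) (Metric.closedBall 0 1) := by
  refine continuousOn_tsum (fun n => by fun_prop) ha fun n z hz => ?_
  rw [norm_mul, norm_pow]
  exact mul_le_of_le_one_right (norm_nonneg _)
    (pow_le_one₀ (norm_nonneg _) (mem_closedBall_zero_iff.1 hz))

end LacunaryPolylog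

section OddWallisRatio

/-- The ratio `(2k)‼ / (2k + 1)‼`, the `k`-th Taylor coefficient of `arcsin t / √(1 - t ^ 2)`. -/
noncomputable def oddWallisRatio (k : ℕ) : ℝ :=
  ∏ i ∈ Finset.range k, (2 * (i : ℝ) + 2) / (2 * i + 3)

theorem oddWallisRatio_zero : oddWallisRatio 0 = 1 := by simp [oddWallisRatio]

theorem oddWallisRatio_succ (k : ℕ) :
    (2 * k + 3) * oddWallisRatio (k + 1) = (2 * k + 2) * oddWallisRatio k := by
  rw [oddWallisRatio, Finset.prod_range_succ, ← oddWallisRatio]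
  field_simp

theorem oddWallisRatio_nonneg (k : ℕ) : 0 ≤ oddWallisRatio k :=
  Finset.prod_nonneg fun _ _ => by positivity

theorem oddWallisRatio_le_one (k : ℕ) : oddWallisRatio k ≤ 1 :=
  Finset.prod_le_one (fun _ _ => by positivity) fun i _ => by
    rw [div_le_one (by positivity)]
    linarith

theorem norm_oddWallisRatio_le_one (k : ℕ) : ‖oddWallisRatio k‖ ≤ 1 := by
  rw [norm_of_nonneg (oddWallisRatio_nonneg k)]
  exact oddWallisRatio_le_one k

theorem oddWallisRatio_eq_four_pow_div (k : ℕ) :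
    oddWallisRatio k = 4 ^ (k + 1) / ((2 * (k + 1)).choose (k + 1) * (2 * (k + 1))) := by
  simp_rw [← Nat.centralBinom_eq_two_mul_choose]
  induction k with
  | zero => norm_num [oddWallisRatio_zero, Nat.centralBinom_eq_two_mul_choose]
  | succ k ih =>
    have hrec : ((k : ℝ) + 1 + 1) * (k + 1 + 1).centralBinom =
        2 * (2 * (k + 1) + 1) * (k + 1).centralBinom :=
      mod_cast Nat.succ_mul_centralBinom_succ (k + 1)
    have hpos (m : ℕ) : (m.centralBinom : ℝ) ≠ 0 := Nat.cast_ne_zero.2 m.centralBinom_ne_zero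
    have hk := hpos (k + 1)
    have hk' := hpos (k + 1 + 1)
    have hsucc := oddWallisRatio_succ k
    rw [ih] at hsucc
    push_cast
    rw [eq_div_iff (by positivity)]
    field_simp at hsucc
    apply mul_left_cancel₀ (show (2 * (k : ℝ) + 3) * (k + 1).centralBinom ≠ 0 by positivity)
    linear_combination ((k + 1 + 1).centralBinom * (k + 2) * 2 : ℝ) * hsucc + 4 ^ (k + 1) * 2 * hrec

/-- Since `c k - c (k + 1) = c k / (2 * k + 3)`, the series telescopes up to a bounded factor. -/
theorem summable_oddWallisRatio_div :
    Summable fun k : ℕ => oddWallisRatio k / (2 * k + 1) := by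
  have htelescope : ∀ k : ℕ, oddWallisRatio k / (2 * k + 3) =
      oddWallisRatio k - oddWallisRatio (k + 1) := fun k => by
    have hsucc := oddWallisRatio_succ k
    field_simp
    linarith
  have hsum : Summable fun k : ℕ => oddWallisRatio k / (2 * k + 3) := by
    refine summable_of_sum_range_le (c := 1)
      (fun k => div_nonneg (oddWallisRatio_nonneg k) (by positivity)) fun n => ?_
    simp only [htelescope, Finset.sum_range_sub', oddWallisRatio_zero]
    linarith [oddWallisRatio_nonneg n]
  refine .of_nonneg_of_le (fun k => div_nonneg (oddWallisRatio_nonneg k) (by positivity))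
    (fun k => ?_) (hsum.mul_left 3)
  have hk := oddWallisRatio_nonneg k
  rw [mul_div_assoc', div_le_div_iff₀ (by positivity) (by positivity)]
  nlinarith

end OddWallisRatio

section ArcsinPolylog

variable {s : ℕ} {t u : ℝ}

/-- The `s`-fold integral against `dt / t` of `arcsin t / √(1 - t ^ 2)`, as a power series. -/
noncomputable def arcsinPolylog (s : ℕ) (t : ℝ) : ℝ :=
  lacunaryPolylog oddWallisRatio (fun k => 2 * k + 1) s t

theorem injective_two_mul_add_one : Function.Injective fun k : ℕ => 2 * k + 1 :=
  fun _ _ h => by simpa using h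

theorem summable_oddWallisRatio_div_pow (hs : s ≠ 0) :
    Summable fun k : ℕ => oddWallisRatio k / ((2 * k + 1 : ℕ) : ℝ) ^ s := by
  refine .of_nonneg_of_le (fun k => div_nonneg (oddWallisRatio_nonneg k) (by positivity))
    (fun k => ?_) summable_oddWallisRatio_div
  push_cast
  have hk := oddWallisRatio_nonneg k
  gcongr
  exact le_self_pow₀ (by linarith [k.cast_nonneg (α := ℝ)]) hs

theorem arcsinPolylog_apply_zero (s : ℕ) : arcsinPolylog s 0 = 0 :=
  lacunaryPolylog_apply_zero (fun _ => Nat.succ_ne_zero _) s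

theorem continuousOn_arcsinPolylog (hs : s ≠ 0) :
    ContinuousOn (arcsinPolylog s) (Metric.closedBall 0 1) :=
  continuousOn_lacunaryPolylog (summable_oddWallisRatio_div_pow hs).norm

theorem hasDerivAt_arcsinPolylog (s : ℕ) (ht0 : t ≠ 0) (ht : ‖t‖ < 1) :
    HasDerivAt (arcsinPolylog (s + 1)) (arcsinPolylog s t / t) t :=
  hasDerivAt_lacunaryPolylog norm_oddWallisRatio_le_one injective_two_mul_add_one
    (fun _ => Nat.succ_ne_zero _) s ht0 ht

theorem arcsinPolylog_zero_eq_tsum (t : ℝ) :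
    arcsinPolylog 0 t = ∑' k, oddWallisRatio k * t ^ (2 * k + 1) := by
  simp [arcsinPolylog, lacunaryPolylog]

theorem hasDerivAt_arcsinPolylog_zero (ht : ‖t‖ < 1) :
    HasDerivAt (arcsinPolylog 0) ((1 + t * arcsinPolylog 0 t) / (1 - t ^ 2)) t := by
  have hderiv := hasDerivAt_tsum_mul_pow norm_oddWallisRatio_le_one injective_two_mul_add_one ht
  have hsum := summable_mul_pow norm_oddWallisRatio_le_one injective_two_mul_add_one ht
  have hsum' := summable_mul_natCast_mul_pow_pred norm_oddWallisRatio_le_one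
    injective_two_mul_add_one ht
  simp only [← arcsinPolylog_zero_eq_tsum, Nat.add_sub_cancel] at hderiv hsum'
  have hshift := hsum'.tsum_eq_zero_add
  set D := ∑' k : ℕ, oddWallisRatio k * (((2 * k + 1 : ℕ) : ℝ) * t ^ (2 * k))
  have htail : ∑' k : ℕ, oddWallisRatio (k + 1) *
      (((2 * (k + 1) + 1 : ℕ) : ℝ) * t ^ (2 * (k + 1))) = t ^ 2 * D + t * arcsinPolylog 0 t := by
    rw [arcsinPolylog_zero_eq_tsum, ← tsum_mul_left, ← tsum_mul_left,
      ← (hsum'.mul_left _).tsum_add (hsum.mul_left _)]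
    refine tsum_congr fun k => ?_
    push_cast
    linear_combination t ^ (2 * k + 2) * oddWallisRatio_succ k
  have hode : D = 1 + (t ^ 2 * D + t * arcsinPolylog 0 t) := by
    rw [← htail, hshift]
    simp [oddWallisRatio_zero]
  refine hderiv.congr_deriv ?_
  have ht2 : 1 - t ^ 2 ≠ 0 := (sub_pos.2 ((sq_lt_one_iff_abs_lt_one t).2 ht)).ne'
  rw [eq_div_iff ht2]
  linear_combination hode

theorem arcsinPolylog_zero_sin_mul_cos {θ : ℝ} (hθ : θ ∈ Set.Ioo (-(π / 2)) (π / 2)) :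
    arcsinPolylog 0 (Real.sin θ) * Real.cos θ = θ := by
  have hderiv : ∀ x ∈ Set.Ioo (-(π / 2)) (π / 2),
      HasDerivAt (fun x => arcsinPolylog 0 (Real.sin x) * Real.cos x) 1 x := fun x hx => by
    have hcos : 0 < Real.cos x := Real.cos_pos_of_mem_Ioo hx
    have hsin : ‖Real.sin x‖ < 1 :=
      (sq_lt_one_iff_abs_lt_one _).1 (by nlinarith [Real.sin_sq_add_cos_sq x])
    refine (((hasDerivAt_arcsinPolylog_zero hsin).comp x (Real.hasDerivAt_sin x)).mul
      (Real.hasDerivAt_cos x)).congr_deriv ?_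
    rw [← Real.cos_sq']
    simp only [Function.comp_apply]
    field_simp
    ring
  have hzero : (0 : ℝ) ∈ Set.Ioo (-(π / 2)) (π / 2) := by constructor <;> linarith [pi_pos]
  exact isOpen_Ioo.eqOn_of_deriv_eq isPreconnected_Ioo
    (fun x hx => (hderiv x hx).differentiableAt.differentiableWithinAt) differentiableOn_id
    (fun x hx => by rw [(hderiv x hx).deriv, deriv_id]) hzero
    (by simp [arcsinPolylog_apply_zero]) hθ

theorem sin_two_mul_arctan (u : ℝ) : Real.sin (2 * Real.arctan u) = 2 * u / (1 + u ^ 2) := by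
  rw [Real.sin_two_mul, Real.sin_arctan, Real.cos_arctan]
  have hsq : √(1 + u ^ 2) ^ 2 = 1 + u ^ 2 := Real.sq_sqrt (by positivity)
  field_simp
  rw [hsq]

theorem cos_two_mul_arctan (u : ℝ) :
    Real.cos (2 * Real.arctan u) = (1 - u ^ 2) / (1 + u ^ 2) := by
  rw [Real.cos_two_mul, Real.cos_sq_arctan]
  field_simp
  ring

theorem arcsinPolylog_zero_two_mul_div (hu : ‖u‖ < 1) :
    arcsinPolylog 0 (2 * u / (1 + u ^ 2)) * ((1 - u ^ 2) / (1 + u ^ 2)) = 2 * Real.arctan u := by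
  obtain ⟨hu_neg, hu_pos⟩ := abs_lt.1 hu
  rw [← sin_two_mul_arctan, ← cos_two_mul_arctan]
  apply arcsinPolylog_zero_sin_mul_cos
  have hlt := Real.arctan_strictMono hu_pos
  have hgt := Real.arctan_strictMono hu_neg
  rw [Real.arctan_neg, Real.arctan_one] at hgt
  rw [Real.arctan_one] at hlt
  constructor <;> linarith

theorem hasDerivAt_two_mul_div_one_add_sq (u : ℝ) :
    HasDerivAt (fun u : ℝ => 2 * u / (1 + u ^ 2)) (2 * (1 - u ^ 2) / (1 + u ^ 2) ^ 2) u := by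
  have hnum : HasDerivAt (fun u : ℝ => 2 * u) 2 u := by simpa using (hasDerivAt_id u).const_mul 2
  have hden : HasDerivAt (fun u : ℝ => 1 + u ^ 2) (2 * u) u := by
    simpa using (hasDerivAt_pow 2 u).const_add 1
  refine (hnum.fun_div hden (by positivity)).congr_deriv ?_
  ring

theorem hasDerivAt_arcsinPolylog_two_mul_div (s : ℕ) (hu : u ∈ Set.Ioo 0 1) :
    HasDerivAt (fun u => arcsinPolylog (s + 1) (2 * u / (1 + u ^ 2)))
      (arcsinPolylog s (2 * u / (1 + u ^ 2)) * ((1 - u ^ 2) / (1 + u ^ 2)) / u) u := by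
  obtain ⟨hu0, hu1⟩ := hu
  have hpos : 0 < 2 * u / (1 + u ^ 2) := by positivity
  have hlt : 2 * u / (1 + u ^ 2) < 1 := by
    rw [div_lt_one (by positivity)]
    nlinarith
  refine ((hasDerivAt_arcsinPolylog s hpos.ne' (by rwa [norm_of_nonneg hpos.le])).comp u
    (hasDerivAt_two_mul_div_one_add_sq u)).congr_deriv ?_
  field_simp

theorem continuousOn_arcsinPolylog_two_mul_div (hs : s ≠ 0) :
    ContinuousOn (fun u => arcsinPolylog s (2 * u / (1 + u ^ 2))) (Set.Icc 0 1) := by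
  refine (continuousOn_arcsinPolylog hs).comp (fun u _ =>
    (hasDerivAt_two_mul_div_one_add_sq u).continuousAt.continuousWithinAt) fun u hu => ?_
  have hnonneg : 0 ≤ 2 * u / (1 + u ^ 2) := div_nonneg (by linarith [hu.1]) (by positivity)
  rw [mem_closedBall_zero_iff, norm_of_nonneg hnonneg, div_le_one (by positivity)]
  nlinarith [sq_nonneg (u - 1)]

end ArcsinPolylog

section Polylog

variable {s : ℕ} {z : ℂ}

/-- The polylogarithm `Liₛ` of integral order, on the closed unit disc. -/
noncomputable def polylog (s : ℕ) (z : ℂ) : ℂ :=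
  lacunaryPolylog (fun _ => 1) Nat.succ s z

theorem polylog_eq_tsum (s : ℕ) (z : ℂ) :
    polylog s z = ∑' n : ℕ, z ^ (n + 1) / ((n : ℂ) + 1) ^ s := by
  simp [polylog, lacunaryPolylog, div_eq_inv_mul]

theorem polylog_apply_zero (s : ℕ) : polylog s 0 = 0 :=
  lacunaryPolylog_apply_zero Nat.succ_ne_zero s

theorem polylog_one (hz : ‖z‖ < 1) : polylog 1 z = -Complex.log (1 - z) := by
  simpa [polylog_eq_tsum] using (hasSum_taylorSeries_neg_log' hz).tsum_eq

theorem polylog_conj (s : ℕ) (z : ℂ) :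
    polylog s (starRingEnd ℂ z) = starRingEnd ℂ (polylog s z) := by
  simp [polylog_eq_tsum, Complex.conj_tsum]

theorem hasDerivAt_polylog (s : ℕ) (hz0 : z ≠ 0) (hz : ‖z‖ < 1) :
    HasDerivAt (polylog (s + 1)) (polylog s z / z) z :=
  hasDerivAt_lacunaryPolylog (C := 1) (by simp) Nat.succ_injective Nat.succ_ne_zero s hz0 hz

theorem summable_norm_one_div_succ_pow (hs : 2 ≤ s) :
    Summable fun n : ℕ => ‖(1 : ℂ) / (n.succ : ℂ) ^ s‖ := by
  simp only [norm_div, norm_one, norm_pow, Complex.norm_natCast]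
  exact (summable_nat_add_iff 1).2 (Real.summable_one_div_nat_pow.2 hs)

theorem hasSum_polylog (hs : 2 ≤ s) (hz : ‖z‖ ≤ 1) :
    HasSum (fun n : ℕ => z ^ (n + 1) / ((n : ℂ) + 1) ^ s) (polylog s z) := by
  rw [polylog_eq_tsum]
  exact ((summable_lacunaryPolylog (summable_norm_one_div_succ_pow hs) hz).congr
    fun n => by simp [div_eq_inv_mul]).hasSum

theorem continuousOn_polylog (hs : 2 ≤ s) :
    ContinuousOn (polylog s) (Metric.closedBall 0 1) :=
  continuousOn_lacunaryPolylog (summable_norm_one_div_succ_pow hs)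

theorem polylog_add_polylog_neg (hs : 2 ≤ s) (hz : ‖z‖ ≤ 1) :
    polylog s z + polylog s (-z) = 2 / 2 ^ s * polylog s (z ^ 2) := by
  have hsum := (hasSum_polylog hs hz).add (hasSum_polylog hs (z := -z) (by rwa [norm_neg]))
  rw [← injective_two_mul_add_one.hasSum_iff fun n hn => ?_] at hsum
  · refine hsum.unique (((hasSum_polylog hs ?_).mul_left (2 / 2 ^ s)).congr_fun fun k => ?_)
    · rw [norm_pow]
      exact pow_le_one₀ (norm_nonneg z) hz
    · have hcast : ((2 * k + 1 : ℕ) : ℂ) + 1 = 2 * (k + 1) := by push_cast; ring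
      rw [Function.comp_apply, hcast, show 2 * k + 1 + 1 = 2 * (k + 1) by ring,
        (even_two_mul _).neg_pow, mul_pow, pow_mul]
      field_simp
      ring
  · have heven : Even n := by simpa [range_two_mul_add_one] using hn
    rw [heven.add_one.neg_pow, neg_div, add_neg_cancel]

theorem polylog_two_one : polylog 2 1 = π ^ 2 / 6 := by
  have hzeta := (hasSum_nat_add_iff' 1).2 hasSum_zeta_two
  refine (hasSum_polylog le_rfl (by simp)).unique ?_
  simpa using hasSum_ofReal.2 hzeta

theorem polylog_two_neg_one : polylog 2 (-1) = -π ^ 2 / 12 := by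
  have hdup := polylog_add_polylog_neg (s := 2) (z := 1) le_rfl (by simp)
  rw [one_pow, polylog_two_one] at hdup
  linear_combination hdup

theorem polylog_two_I_re : (polylog 2 I).re = -π ^ 2 / 48 := by
  have hdup := polylog_add_polylog_neg (s := 2) (z := I) le_rfl (by simp)
  rw [← conj_I, polylog_conj, add_conj, I_sq, polylog_two_neg_one] at hdup
  have hre : 2 * (polylog 2 I).re = 2 / 2 ^ 2 * (-π ^ 2 / 12) := by
    apply ofReal_injective
    rw [hdup]
    push_cast
    rfl
  linarith

theorem hasSum_im_polylog_I (hs : 2 ≤ s) :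
    HasSum (fun k : ℕ => (-1 : ℝ) ^ k / (2 * k + 1) ^ s) (polylog s I).im := by
  have hsum : HasSum (fun n : ℕ => (I ^ (n + 1)).im / ((n : ℝ) + 1) ^ s) (polylog s I).im := by
    refine (Complex.hasSum_im (hasSum_polylog hs (z := I) (by simp))).congr_fun fun n => ?_
    rw [← div_ofReal_im]
    push_cast
    rfl
  rw [← (mul_right_injective₀ (two_ne_zero' ℕ)).hasSum_iff fun n hn => ?_] at hsum
  · refine hsum.congr_fun fun k => ?_
    have hI : I ^ (2 * k + 1) = ((-1 : ℝ) ^ k : ℝ) * I := by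
      rw [pow_succ, pow_mul, I_sq]
      push_cast
      rfl
    rw [Function.comp_apply, hI, im_ofReal_mul, I_im, mul_one]
    push_cast
    rfl
  · have hodd : Odd n := by simpa [range_two_mul] using hn
    obtain ⟨m, hm⟩ := hodd.add_one
    have hI : I ^ (n + 1) = ((-1 : ℝ) ^ m : ℝ) := by
      rw [hm, ← two_mul, pow_mul, I_sq]
      push_cast
      rfl
    rw [hI, ofReal_im, zero_div]

theorem polylog_three_I_im : (polylog 3 I).im = π ^ 3 / 32 := by
  refine (hasSum_im_polylog_I (by norm_num)).unique ?_
  have hsum := hasSum_L_function_mod_four_eval_three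
  rw [← injective_two_mul_add_one.hasSum_iff fun n hn => ?_] at hsum
  · refine hsum.congr_fun fun k => ?_
    rw [Function.comp_apply, show π * ((2 * k + 1 : ℕ) : ℝ) / 2 = k * π + π / 2 by push_cast; ring,
      Real.sin_add_pi_div_two, Real.cos_nat_mul_pi]
    push_cast
    ring
  · have heven : Even n := by simpa [range_two_mul_add_one] using hn
    obtain ⟨m, rfl⟩ := heven.two_dvd
    rw [show π * ((2 * m : ℕ) : ℝ) / 2 = m * π by push_cast; ring, Real.sin_nat_mul_pi, mul_zero]

end Polylog

section Landen

variable {s : ℕ} {z : ℂ}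

/-- The part of the closed unit disc which the involution `z ↦ z / (z - 1)` maps into the closed
unit disc. -/
def landenRegion : Set ℂ := {z | ‖z‖ ≤ 1 ∧ z.re ≤ 1 / 2}

theorem sub_one_ne_zero_of_re_le_half (hre : z.re ≤ 1 / 2) : z - 1 ≠ 0 := by
  rintro h
  have hone : z.re = 1 := by rw [sub_eq_zero.1 h, one_re]
  linarith

theorem one_sub_mem_slitPlane_of_re_le_half (hre : z.re ≤ 1 / 2) : 1 - z ∈ slitPlane :=
  .inl (by rw [sub_re, one_re]; linarith)

theorem norm_div_sub_one_le_one (hre : z.re ≤ 1 / 2) : ‖z / (z - 1)‖ ≤ 1 := by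
  rw [norm_div, div_le_one (norm_pos_iff.2 (sub_one_ne_zero_of_re_le_half hre)),
    ← sq_le_sq₀ (norm_nonneg _) (norm_nonneg _), ← normSq_eq_norm_sq, ← normSq_eq_norm_sq,
    normSq_sub, normSq_one, map_one, mul_one]
  linarith

theorem norm_div_sub_one_lt_one (hre : z.re < 1 / 2) : ‖z / (z - 1)‖ < 1 := by
  rw [norm_div, div_lt_one (norm_pos_iff.2 (sub_one_ne_zero_of_re_le_half hre.le)),
    ← sq_lt_sq₀ (norm_nonneg _) (norm_nonneg _), ← normSq_eq_norm_sq, ← normSq_eq_norm_sq,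
    normSq_sub, normSq_one, map_one, mul_one]
  linarith

theorem hasDerivAt_log_one_sub (hz : 1 - z ∈ slitPlane) :
    HasDerivAt (fun w => Complex.log (1 - w)) (-1 / (1 - z)) z :=
  ((hasDerivAt_id z).const_sub 1).clog hz

theorem hasDerivAt_div_sub_one (hz : z - 1 ≠ 0) :
    HasDerivAt (fun w : ℂ => w / (w - 1)) (-1 / (z - 1) ^ 2) z := by
  refine ((hasDerivAt_id z).fun_div ((hasDerivAt_id z).sub_const 1) hz).congr_deriv ?_
  simp only [id_eq]
  ring

theorem hasDerivAt_polylog_div_sub_one (s : ℕ) (hz0 : z ≠ 0) (hre : z.re < 1 / 2) :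
    HasDerivAt (fun w => polylog (s + 1) (w / (w - 1)))
      (polylog s (z / (z - 1)) / (z * (1 - z))) z := by
  have hz1 := sub_one_ne_zero_of_re_le_half hre.le
  have hz1' : 1 - z ≠ 0 := slitPlane_ne_zero (one_sub_mem_slitPlane_of_re_le_half hre.le)
  refine ((hasDerivAt_polylog s (div_ne_zero hz0 hz1) (norm_div_sub_one_lt_one hre)).comp z
    (hasDerivAt_div_sub_one hz1)).congr_deriv ?_
  field_simp
  ring

theorem polylog_one_div_sub_one (hre : z.re < 1 / 2) :
    polylog 1 (z / (z - 1)) = Complex.log (1 - z) := by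
  have hslit := one_sub_mem_slitPlane_of_re_le_half hre.le
  have hz1 := sub_one_ne_zero_of_re_le_half hre.le
  have hinv : 1 - z / (z - 1) = (1 - z)⁻¹ := by
    rw [eq_comm, inv_eq_of_mul_eq_one_right]
    field_simp
    ring
  rw [polylog_one (norm_div_sub_one_lt_one hre), hinv,
    Complex.log_inv _ (slitPlane_arg_ne_pi hslit), neg_neg]

theorem continuousOn_log_one_sub : ContinuousOn (fun z => Complex.log (1 - z)) landenRegion :=
  fun _ hz => (hasDerivAt_log_one_sub
    (one_sub_mem_slitPlane_of_re_le_half hz.2)).continuousAt.continuousWithinAt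

theorem continuousOn_polylog_landenRegion (hs : 2 ≤ s) :
    ContinuousOn (polylog s) landenRegion :=
  (continuousOn_polylog hs).mono fun _ hz => mem_closedBall_zero_iff.2 hz.1

theorem continuousOn_polylog_div_sub_one (hs : 2 ≤ s) :
    ContinuousOn (fun z => polylog s (z / (z - 1))) landenRegion :=
  (continuousOn_polylog hs).comp
    (fun _ hz => (hasDerivAt_div_sub_one
      (sub_one_ne_zero_of_re_le_half hz.2)).continuousAt.continuousWithinAt)
    fun _ hz => mem_closedBall_zero_iff.2 (norm_div_sub_one_le_one hz.2)

theorem ofReal_mul_mem_landenRegion {u : ℝ} (hz : z ∈ landenRegion) (hu : u ∈ Set.Icc 0 1) :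
    (u : ℂ) * z ∈ landenRegion := by
  obtain ⟨hnorm, hre⟩ := hz
  refine ⟨?_, ?_⟩
  · rw [norm_mul, norm_real, norm_of_nonneg hu.1]
    exact mul_le_one₀ hu.2 (norm_nonneg z) hnorm
  · rw [re_ofReal_mul]
    nlinarith [hu.1, hu.2]

theorem norm_ofReal_mul_lt_one {u : ℝ} (hz : z ∈ landenRegion) (hu : u ∈ Set.Ioo 0 1) :
    ‖(u : ℂ) * z‖ < 1 := by
  rw [norm_mul, norm_real, norm_of_nonneg hu.1.le]
  exact mul_lt_one_of_nonneg_of_lt_one_left hu.1.le hu.2 hz.1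

theorem re_ofReal_mul_lt_half {u : ℝ} (hz : z ∈ landenRegion) (hu : u ∈ Set.Ioo 0 1) :
    ((u : ℂ) * z).re < 1 / 2 := by
  rw [re_ofReal_mul]
  nlinarith [hu.1, hu.2, hz.2]

theorem continuousOn_comp_ofReal_mul {F : ℂ → ℂ} (hF : ContinuousOn F landenRegion)
    (hz : z ∈ landenRegion) : ContinuousOn (fun u : ℝ => F (u * z)) (Set.Icc 0 1) :=
  hF.comp (by fun_prop) fun _ hu => ofReal_mul_mem_landenRegion hz hu

theorem hasDerivAt_comp_ofReal_mul {F : ℂ → ℂ} {G : ℂ} {u : ℝ} (hz : z ≠ 0)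
    (hF : HasDerivAt F (G / (u * z)) (u * z)) :
    HasDerivAt (fun u : ℝ => F (u * z)) (G / u) u := by
  have hray : HasDerivAt (fun u : ℝ => (u : ℂ) * z) z u := by
    simpa using (hasDerivAt_id u).ofReal_comp.mul_const z
  refine (hF.comp u hray).congr_deriv ?_
  field_simp

theorem hasDerivAt_landen (hz0 : z ≠ 0) (hz : ‖z‖ < 1) (hre : z.re < 1 / 2) :
    HasDerivAt (fun w => polylog 2 w + polylog 2 (w / (w - 1)) + Complex.log (1 - w) ^ 2 / 2)
      0 z := by
  have hslit := one_sub_mem_slitPlane_of_re_le_half hre.le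
  have hz1 := slitPlane_ne_zero hslit
  refine (((hasDerivAt_polylog 1 hz0 hz).add (hasDerivAt_polylog_div_sub_one 1 hz0 hre)).add
    (((hasDerivAt_log_one_sub hslit).pow 2).div_const 2)).congr_deriv ?_
  rw [polylog_one hz, polylog_one_div_sub_one hre]
  field_simp
  ring

theorem polylog_two_add_polylog_two_div_sub_one (hz : z ∈ landenRegion) :
    polylog 2 z + polylog 2 (z / (z - 1)) = -Complex.log (1 - z) ^ 2 / 2 := by
  rcases eq_or_ne z 0 with rfl | hz0
  · simp [polylog_apply_zero]
  have hcont : ContinuousOn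
      (fun w => polylog 2 w + polylog 2 (w / (w - 1)) + Complex.log (1 - w) ^ 2 / 2)
      landenRegion :=
    ((continuousOn_polylog_landenRegion le_rfl).add (continuousOn_polylog_div_sub_one le_rfl)).add
      ((continuousOn_log_one_sub.pow 2).div_const 2)
  have hderiv : ∀ u ∈ Set.Ioo (0 : ℝ) 1, HasDerivAt (fun u : ℝ => polylog 2 (u * z) +
      polylog 2 (u * z / (u * z - 1)) + Complex.log (1 - u * z) ^ 2 / 2) 0 u := fun u hu => by
    have hu0 : (u : ℂ) * z ≠ 0 := mul_ne_zero (ofReal_ne_zero.2 hu.1.ne') hz0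
    have hlanden := hasDerivAt_landen hu0 (norm_ofReal_mul_lt_one hz hu)
      (re_ofReal_mul_lt_half hz hu)
    rw [← zero_div (u * z : ℂ)] at hlanden
    simpa only [zero_div] using hasDerivAt_comp_ofReal_mul hz0 hlanden
  have heq := eqOn_Icc_of_hasDerivAt_eq (continuousOn_comp_ofReal_mul hcont hz)
    continuousOn_const hderiv (fun u _ => hasDerivAt_const u 0)
    (by simp [polylog_apply_zero]) (Set.right_mem_Icc.2 zero_le_one)
  simp only [ofReal_one, one_mul] at heq
  linear_combination heq

/-- The Nielsen polylogarithm `S₁,₂(z) = ½ ∫₀ᶻ log² (1 - w) / w dw` on `landenRegion`, in closed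
form in terms of `Li₂` and `Li₃`. -/
noncomputable def nielsenPolylog (z : ℂ) : ℂ :=
  polylog 3 (z / (z - 1)) + polylog 3 z - Complex.log (1 - z) * polylog 2 z -
    Complex.log (1 - z) ^ 3 / 6

theorem nielsenPolylog_apply_zero : nielsenPolylog 0 = 0 := by
  simp [nielsenPolylog, polylog_apply_zero]

theorem hasDerivAt_nielsenPolylog (hz0 : z ≠ 0) (hz : ‖z‖ < 1) (hre : z.re < 1 / 2) :
    HasDerivAt nielsenPolylog (Complex.log (1 - z) ^ 2 / 2 / z) z := by
  have hslit := one_sub_mem_slitPlane_of_re_le_half hre.le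
  have hz1 := slitPlane_ne_zero hslit
  have hlog := hasDerivAt_log_one_sub hslit
  refine ((((hasDerivAt_polylog_div_sub_one 2 hz0 hre).add (hasDerivAt_polylog 2 hz0 hz)).sub
    (hlog.mul (hasDerivAt_polylog 1 hz0 hz))).sub ((hlog.pow 3).div_const 6)).congr_deriv ?_
  have hlanden := polylog_two_add_polylog_two_div_sub_one ⟨hz.le, hre.le⟩
  rw [polylog_one hz, eq_sub_of_add_eq' hlanden]
  field_simp
  ring

theorem continuousOn_nielsenPolylog : ContinuousOn nielsenPolylog landenRegion :=
  (((continuousOn_polylog_div_sub_one (by norm_num)).add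
    (continuousOn_polylog_landenRegion (by norm_num))).sub
    (continuousOn_log_one_sub.mul (continuousOn_polylog_landenRegion le_rfl))).sub
    ((continuousOn_log_one_sub.pow 3).div_const 6)

end Landen

section HalfAngle

variable {u : ℝ}

theorem I_mem_landenRegion : I ∈ landenRegion := by
  norm_num [landenRegion]

theorem norm_one_sub_ofReal_mul_I (u : ℝ) : ‖1 - u * I‖ = √(1 + u ^ 2) := by
  simpa [sub_eq_add_neg] using norm_add_mul_I 1 (-u)

theorem log_one_sub_ofReal_mul_I_re (u : ℝ) :
    (Complex.log (1 - u * I)).re = Real.log (1 + u ^ 2) / 2 := by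
  rw [Complex.log_re, norm_one_sub_ofReal_mul_I, Real.log_sqrt (by positivity)]

theorem log_one_sub_ofReal_mul_I_im (u : ℝ) :
    (Complex.log (1 - u * I)).im = -Real.arctan u := by
  rw [Complex.log_im, arg_of_re_nonneg (by simp), norm_one_sub_ofReal_mul_I, Real.arctan_eq_arcsin,
    ← Real.arcsin_neg]
  simp [neg_div]

theorem hasDerivAt_im_comp_ofReal_mul_I {F : ℂ → ℂ} {G : ℂ}
    (hF : HasDerivAt F (G / (u * I)) (u * I)) :
    HasDerivAt (fun u : ℝ => (F (u * I)).im) (G.im / u) u := by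
  rw [← div_ofReal_im]
  exact imCLM.hasFDerivAt.comp_hasDerivAt u (hasDerivAt_comp_ofReal_mul I_ne_zero hF)

theorem continuousOn_im_comp_ofReal_mul_I {F : ℂ → ℂ} (hF : ContinuousOn F landenRegion) :
    ContinuousOn (fun u : ℝ => (F (u * I)).im) (Set.Icc 0 1) :=
  continuous_im.comp_continuousOn (continuousOn_comp_ofReal_mul hF I_mem_landenRegion)

theorem hasDerivAt_im_polylog_ofReal_mul_I (s : ℕ) (hu : u ∈ Set.Ioo 0 1) :
    HasDerivAt (fun u : ℝ => (polylog (s + 1) (u * I)).im) ((polylog s (u * I)).im / u) u :=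
  hasDerivAt_im_comp_ofReal_mul_I (hasDerivAt_polylog s
    (mul_ne_zero (ofReal_ne_zero.2 hu.1.ne') I_ne_zero)
    (norm_ofReal_mul_lt_one I_mem_landenRegion hu))

theorem im_polylog_one_ofReal_mul_I (hu : u ∈ Set.Ioo 0 1) :
    (polylog 1 (u * I)).im = Real.arctan u := by
  rw [polylog_one (norm_ofReal_mul_lt_one I_mem_landenRegion hu), neg_im,
    log_one_sub_ofReal_mul_I_im, neg_neg]

theorem hasDerivAt_im_nielsenPolylog_ofReal_mul_I (hu : u ∈ Set.Ioo 0 1) :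
    HasDerivAt (fun u : ℝ => (nielsenPolylog (u * I)).im)
      (-(Real.log (1 + u ^ 2) * Real.arctan u) / 2 / u) u := by
  refine (hasDerivAt_im_comp_ofReal_mul_I (hasDerivAt_nielsenPolylog
    (mul_ne_zero (ofReal_ne_zero.2 hu.1.ne') I_ne_zero)
    (norm_ofReal_mul_lt_one I_mem_landenRegion hu)
    (re_ofReal_mul_lt_half I_mem_landenRegion hu))).congr_deriv ?_
  rw [div_ofNat_im, sq, mul_im, log_one_sub_ofReal_mul_I_re, log_one_sub_ofReal_mul_I_im]
  ring

theorem arcsinPolylog_one_two_mul_div (hu : u ∈ Set.Icc 0 1) :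
    arcsinPolylog 1 (2 * u / (1 + u ^ 2)) = 2 * (polylog 2 (u * I)).im := by
  refine eqOn_Icc_of_hasDerivAt_eq (continuousOn_arcsinPolylog_two_mul_div one_ne_zero)
    ((continuousOn_im_comp_ofReal_mul_I
      (continuousOn_polylog_landenRegion le_rfl)).const_mul 2)
    (fun v hv => hasDerivAt_arcsinPolylog_two_mul_div 0 hv) (fun v hv => ?_)
    (by simp [arcsinPolylog_apply_zero, polylog_apply_zero]) hu
  refine ((hasDerivAt_im_polylog_ofReal_mul_I 1 hv).const_mul 2).congr_deriv ?_
  rw [im_polylog_one_ofReal_mul_I hv, arcsinPolylog_zero_two_mul_div (by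
    rw [norm_of_nonneg hv.1.le]; exact hv.2), mul_div_assoc]

theorem hasDerivAt_log_one_add_sq (u : ℝ) :
    HasDerivAt (fun u : ℝ => Real.log (1 + u ^ 2)) (2 * u / (1 + u ^ 2)) u := by
  simpa using ((hasDerivAt_pow 2 u).const_add 1).log (by positivity)

theorem arcsinPolylog_two_two_mul_div (hu : u ∈ Set.Icc 0 1) :
    arcsinPolylog 2 (2 * u / (1 + u ^ 2)) =
      2 * (polylog 3 (u * I)).im - 2 * (Real.log (1 + u ^ 2) * (polylog 2 (u * I)).im) -
        4 * (nielsenPolylog (u * I)).im := by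
  refine eqOn_Icc_of_hasDerivAt_eq (continuousOn_arcsinPolylog_two_mul_div two_ne_zero)
    ((((continuousOn_im_comp_ofReal_mul_I
      (continuousOn_polylog_landenRegion (by norm_num))).const_mul 2).sub
      (ContinuousOn.const_mul (ContinuousOn.mul
        (fun v _ => (hasDerivAt_log_one_add_sq v).continuousAt.continuousWithinAt)
        (continuousOn_im_comp_ofReal_mul_I (continuousOn_polylog_landenRegion le_rfl))) 2)).sub
      ((continuousOn_im_comp_ofReal_mul_I continuousOn_nielsenPolylog).const_mul 4))
    (fun v hv => hasDerivAt_arcsinPolylog_two_mul_div 1 hv) (fun v hv => ?_)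
    (by simp [arcsinPolylog_apply_zero, polylog_apply_zero, nielsenPolylog_apply_zero]) hu
  refine ((((hasDerivAt_im_polylog_ofReal_mul_I 2 hv).const_mul 2).sub
    (((hasDerivAt_log_one_add_sq v).mul (hasDerivAt_im_polylog_ofReal_mul_I 1 hv)).const_mul 2)).sub
    ((hasDerivAt_im_nielsenPolylog_ofReal_mul_I hv).const_mul 4)).congr_deriv ?_
  have hv0 : v ≠ 0 := hv.1.ne'
  rw [im_polylog_one_ofReal_mul_I hv, arcsinPolylog_one_two_mul_div (Set.Ioo_subset_Icc_self hv)]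
  field_simp
  ring

end HalfAngle

section Evaluation

theorem I_div_I_sub_one : I / (I - 1) = starRingEnd ℂ ((1 + I) / 2) := by
  have hI : I - 1 ≠ 0 := sub_one_ne_zero_of_re_le_half I_mem_landenRegion.2
  rw [map_div₀, map_add, map_one, map_ofNat, conj_I]
  field_simp
  linear_combination I_sq

theorem nielsenPolylog_I_im :
    (nielsenPolylog I).im = -(polylog 3 ((1 + I) / 2)).im + 3 * π ^ 3 / 128 -
      Real.log 2 / 2 * (polylog 2 I).im + π * Real.log 2 ^ 2 / 32 := by
  have hre : (Complex.log (1 - I)).re = Real.log 2 / 2 := by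
    simpa [one_add_one_eq_two] using log_one_sub_ofReal_mul_I_re 1
  have him : (Complex.log (1 - I)).im = -(π / 4) := by
    simpa [Real.arctan_one] using log_one_sub_ofReal_mul_I_im 1
  rw [nielsenPolylog, I_div_I_sub_one, polylog_conj]
  simp only [sub_im, add_im, conj_im, mul_im, mul_re, div_ofNat_im, pow_succ, pow_zero, one_mul,
    hre, him, polylog_two_I_re, polylog_three_I_im]
  ring

theorem arcsinPolylog_one_one :
    arcsinPolylog 1 1 = 2 * ∑' k : ℕ, (-1 : ℝ) ^ k / (2 * k + 1) ^ 2 := by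
  rw [(hasSum_im_polylog_I le_rfl).tsum_eq]
  simpa [one_add_one_eq_two] using
    arcsinPolylog_one_two_mul_div (Set.right_mem_Icc.2 zero_le_one)

theorem arcsinPolylog_two_one :
    arcsinPolylog 2 1 =
      4 * (polylog 3 ((1 + I) / 2)).im - π ^ 3 / 32 - π * Real.log 2 ^ 2 / 8 := by
  have hhalf := arcsinPolylog_two_two_mul_div (Set.right_mem_Icc.2 zero_le_one)
  rw [one_pow, one_add_one_eq_two, mul_one, div_self two_ne_zero, ofReal_one, one_mul,
    nielsenPolylog_I_im, polylog_three_I_im] at hhalf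
  linear_combination hhalf

theorem tsum_four_pow_div_choose_mul_sq :
    ∑' n : ℕ, (4 : ℝ) ^ (n + 1) / ((2 * (n + 1)).choose (n + 1) * (2 * ((n : ℝ) + 1) - 1) ^ 2) =
      arcsinPolylog 1 1 + arcsinPolylog 2 1 := by
  simp only [arcsinPolylog, lacunaryPolylog, one_pow, mul_one]
  rw [← (summable_oddWallisRatio_div_pow one_ne_zero).tsum_add
    (summable_oddWallisRatio_div_pow two_ne_zero)]
  refine tsum_congr fun n => ?_
  have hchoose : ((2 * (n + 1)).choose (n + 1) : ℝ) ≠ 0 :=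
    Nat.cast_ne_zero.2 (Nat.choose_pos (by lia)).ne'
  have hodd : 2 * ((n : ℝ) + 1) - 1 = 2 * n + 1 := by ring
  rw [oddWallisRatio_eq_four_pow_div, hodd]
  push_cast
  field_simp
  ring

end Evaluation

/-- `∑_{n≥1} 4^n/(binom(2n,n)(2n−1)²)
  = 2G − π³/32 + 4 Im Li₃((1+i)/2) − π log²2 / 8`. -/
theorem stmt12 :
    (∑' n : ℕ, (4 : ℝ) ^ (n + 1) /
      ((Nat.choose (2 * (n + 1)) (n + 1) : ℝ) * (2 * ((n : ℝ) + 1) - 1) ^ 2)) =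
    2 * (∑' k : ℕ, (-1 : ℝ) ^ k / (2 * (k : ℝ) + 1) ^ 2) - π ^ 3 / 32 +
      4 * (∑' n : ℕ, ((1 + Complex.I) / 2) ^ (n + 1) / ((n : ℂ) + 1) ^ 3).im -
      π * Real.log 2 ^ 2 / 8 := by
  rw [tsum_four_pow_div_choose_mul_sq, arcsinPolylog_one_one, arcsinPolylog_two_one,
    ← polylog_eq_tsum]
  ring
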